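/- For every real γ one has Ψ̲_1(Λ(Θ), μ(γ)) ≤ Ψ̲_1(Λ*(Θ), −μ(γ))/(d−1). -/

import Mathlib

open Filter

noncomputable section

/-- The weighted norm `|x|_w = max_j |x_j|^(1/w_j)`. -/
def wnorm {k : ℕ} (w : Fin k → ℝ) (x : Fin k → ℝ) : ℝ := ⨆ j, |x j| ^ ((1 : ℝ) / w j)

/-- The lattice `Λ(Θ) = {(x, y − Θx) : x ∈ ℤ^m, y ∈ ℤ^n} ⊂ ℝ^(m+n)`. -/
def latt (m n : ℕ) (Θ : Matrix (Fin n) (Fin m) ℝ) : Set (Fin (m + n) → ℝ) :=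
  {v | ∃ (x : Fin m → ℤ) (y : Fin n → ℤ),
    v = Fin.append (fun j => (x j : ℝ))
      (fun i => (y i : ℝ) - Θ.mulVec (fun j => (x j : ℝ)) i)}

/-- The dual lattice `Λ*(Θ) = {(x + ᵀΘy, y) : x ∈ ℤ^m, y ∈ ℤ^n} ⊂ ℝ^(m+n)`. -/
def lattDual (m n : ℕ) (Θ : Matrix (Fin n) (Fin m) ℝ) : Set (Fin (m + n) → ℝ) :=
  {v | ∃ (x : Fin m → ℤ) (y : Fin n → ℤ),
    v = Fin.append (fun j => (x j : ℝ) + Θ.transpose.mulVec (fun i => (y i : ℝ)) j)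
      (fun i => (y i : ℝ))}

/-- `e₁ = (1−dσ₁, …, 1−dσ_m, 1, …, 1)` with `n` trailing ones, `d = m + n`. -/
def eOne (m n : ℕ) (σ : Fin m → ℝ) : Fin (m + n) → ℝ :=
  Fin.append (fun j => 1 - ((m + n : ℕ) : ℝ) * σ j) (fun _ => 1)

/-- `e₂ = (1, …, 1, 1−dρ_n, …, 1−dρ₁)` with `m` leading ones, `d = m + n`. -/
def eTwo (m n : ℕ) (ρ : Fin n → ℝ) : Fin (m + n) → ℝ :=
  Fin.append (fun _ => (1 : ℝ)) (fun i => 1 - ((m + n : ℕ) : ℝ) * ρ i.rev)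

/-- `μ(γ) = −e₁ + γ e₂`. -/
def muGamma (m n : ℕ) (σ : Fin m → ℝ) (ρ : Fin n → ℝ) (γ : ℝ) : Fin (m + n) → ℝ :=
  -eOne m n σ + γ • eTwo m n ρ

/-- `μ*(δ) = δ e₁ − e₂`. -/
def muStar (m n : ℕ) (σ : Fin m → ℝ) (ρ : Fin n → ℝ) (δ : ℝ) : Fin (m + n) → ℝ :=
  δ • eOne m n σ - eTwo m n ρ

/-- The `k`-th successive minimum `λ_k(B_τ, Λ)` of the box
`B_τ = {z : |z_i| ≤ exp (τ i)}` with respect to the lattice `Λ`. -/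
def succMin (d : ℕ) (Λ : Set (Fin d → ℝ)) (τ : Fin d → ℝ) (k : ℕ) : ℝ :=
  sInf {lam : ℝ | 0 < lam ∧ ∃ v : Fin k → (Fin d → ℝ),
    (∀ l, v l ∈ Λ) ∧ LinearIndependent ℝ v ∧ ∀ l i, |v l i| ≤ lam * Real.exp (τ i)}

/-- `L_k(Λ, τ) = log λ_k(B_τ, Λ)`. -/
def Lk (d : ℕ) (Λ : Set (Fin d → ℝ)) (τ : Fin d → ℝ) (k : ℕ) : ℝ :=
  Real.log (succMin d Λ τ k)

/-- `S_k(Λ, τ) = L_1(Λ, τ) + ⋯ + L_k(Λ, τ)`. -/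
def Sk (d : ℕ) (Λ : Set (Fin d → ℝ)) (τ : Fin d → ℝ) (k : ℕ) : ℝ :=
  ∑ j ∈ Finset.Icc 1 k, Lk d Λ τ j

/-- Schmidt–Summerer lower exponent of the first type:
`ψ̲_k(Λ, μ) = liminf_{s→+∞} L_k(Λ, sμ)/s`. -/
def psiLow (d : ℕ) (Λ : Set (Fin d → ℝ)) (μ : Fin d → ℝ) (k : ℕ) : ℝ :=
  liminf (fun s : ℝ => Lk d Λ (s • μ) k / s) atTop

/-- Schmidt–Summerer upper exponent of the first type:
`ψ̄_k(Λ, μ) = limsup_{s→+∞} L_k(Λ, sμ)/s`. -/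
def psiUp (d : ℕ) (Λ : Set (Fin d → ℝ)) (μ : Fin d → ℝ) (k : ℕ) : ℝ :=
  limsup (fun s : ℝ => Lk d Λ (s • μ) k / s) atTop

/-- Schmidt–Summerer lower exponent of the second type:
`Ψ̲_k(Λ, μ) = liminf_{s→+∞} S_k(Λ, sμ)/s`. -/
def PsiLow (d : ℕ) (Λ : Set (Fin d → ℝ)) (μ : Fin d → ℝ) (k : ℕ) : ℝ :=
  liminf (fun s : ℝ => Sk d Λ (s • μ) k / s) atTop

/-- Schmidt–Summerer upper exponent of the second type:
`Ψ̄_k(Λ, μ) = limsup_{s→+∞} S_k(Λ, sμ)/s`. -/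
def PsiUp (d : ℕ) (Λ : Set (Fin d → ℝ)) (μ : Fin d → ℝ) (k : ℕ) : ℝ :=
  limsup (fun s : ℝ => Sk d Λ (s • μ) k / s) atTop

/-- The system `|x|_σ ≤ t`, `|Θx − y|_ρ ≤ t^(−γ)` admits `k` linearly independent integer
solutions. -/
def solvK {m n : ℕ} (Θ : Matrix (Fin n) (Fin m) ℝ) (σ : Fin m → ℝ) (ρ : Fin n → ℝ)
    (k : ℕ) (γ t : ℝ) : Prop :=
  ∃ v : Fin k → (Fin m → ℤ) × (Fin n → ℤ), LinearIndependent ℤ v ∧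
    ∀ l, wnorm σ (fun j => ((v l).1 j : ℝ)) ≤ t ∧
      wnorm ρ (fun i => Θ.mulVec (fun j => ((v l).1 j : ℝ)) i - ((v l).2 i : ℝ)) ≤ t ^ (-γ)

/-- The `k`-th weighted Diophantine exponent `ω^(k)_{σ,ρ}(Θ)`. -/
def omegaK {m n : ℕ} (Θ : Matrix (Fin n) (Fin m) ℝ) (σ : Fin m → ℝ) (ρ : Fin n → ℝ)
    (k : ℕ) : EReal :=
  sSup (Real.toEReal '' {γ : ℝ | ∀ T : ℝ, ∃ t > T, solvK Θ σ ρ k γ t})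

/-- The `k`-th weighted uniform Diophantine exponent `ω̂^(k)_{σ,ρ}(Θ)`. -/
def omegaHatK {m n : ℕ} (Θ : Matrix (Fin n) (Fin m) ℝ) (σ : Fin m → ℝ) (ρ : Fin n → ℝ)
    (k : ℕ) : EReal :=
  sSup (Real.toEReal '' {γ : ℝ | ∃ T : ℝ, ∀ t > T, solvK Θ σ ρ k γ t})

/-- Minkowski's linear forms theorem (strict version) over `ℤ^ι`. -/
theorem minkowski_forms {ι : Type*} [Fintype ι] [DecidableEq ι] (A : Matrix ι ι ℝ)
    (hA : A.det ≠ 0) (c : ι → ℝ) (hc : ∀ i, 0 < c i) (h : |A.det| < ∏ i, c i) :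
    ∃ x : ι → ℤ, x ≠ 0 ∧ ∀ i, |A.mulVec (fun j => (x j : ℝ)) i| < c i := by
  classical
  let b := Pi.basisFun ℝ ι
  let L := (Submodule.span ℤ (Set.range b)).toAddSubgroup
  haveI : Countable L := inferInstanceAs (Countable (Submodule.span ℤ (Set.range b)))
  have fund := ZSpan.isAddFundamentalDomain' b (MeasureTheory.volume)
  let box : Set (ι → ℝ) := Set.univ.pi (fun i => Set.Ioo (-c i) (c i))
  let s : Set (ι → ℝ) := (Matrix.toLin' A) ⁻¹' box
  have hdet : LinearMap.det (Matrix.toLin' A) ≠ 0 := by rwa [LinearMap.det_toLin']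
  have hpos : 0 < |A.det| := abs_pos.2 hA
  have hvol : MeasureTheory.volume s
      = ENNReal.ofReal (|A.det|⁻¹ * (2 ^ Fintype.card ι * ∏ i, c i)) := by
    rw [MeasureTheory.Measure.addHaar_preimage_linearMap _ hdet, LinearMap.det_toLin', abs_inv,
      ENNReal.ofReal_mul (by positivity), Real.volume_pi_Ioo]
    congr 1
    rw [← ENNReal.ofReal_prod_of_nonneg (fun i _ => by linarith [hc i])]
    congr 1
    rw [← Finset.card_univ, ← Finset.prod_const, ← Finset.prod_mul_distrib]
    exact Finset.prod_congr rfl (fun i _ => by ring)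
  have hF : MeasureTheory.volume (ZSpan.fundamentalDomain b) = 1 := by
    rw [ZSpan.volume_fundamentalDomain]
    have : Matrix.of (⇑b) = (1 : Matrix ι ι ℝ) := by
      ext i j
      simp [b, Matrix.one_apply, Pi.single_apply, eq_comm]
    rw [this]; simp
  have hsymm : ∀ x ∈ s, -x ∈ s := by
    intro x hx
    simp only [s, box, Set.mem_preimage, Set.mem_univ_pi, Set.mem_Ioo, map_neg, Pi.neg_apply] at hx ⊢
    intro i
    constructor <;> linarith [(hx i).1, (hx i).2]
  have hconv : Convex ℝ s :=
    (convex_pi (fun i _ => convex_Ioo _ _)).linear_preimage _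
  have hlt : MeasureTheory.volume (ZSpan.fundamentalDomain b) * 2 ^ Module.finrank ℝ (ι → ℝ)
      < MeasureTheory.volume s := by
    rw [hF, hvol, one_mul, Module.finrank_fintype_fun_eq_card]
    have h2 : (2 : ENNReal) ^ Fintype.card ι = ENNReal.ofReal (2 ^ Fintype.card ι) := by
      rw [ENNReal.ofReal_pow (by norm_num)]; simp
    rw [h2]
    have hp : (0:ℝ) < 2 ^ Fintype.card ι := by positivity
    have hprod : 0 < ∏ i, c i := hpos.trans h
    apply (ENNReal.ofReal_lt_ofReal_iff (by positivity)).2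
    rw [inv_mul_eq_div, lt_div_iff₀ hpos]
    exact mul_lt_mul_of_pos_left h hp
  obtain ⟨x, hx0, hxs⟩ :=
    MeasureTheory.exists_ne_zero_mem_lattice_of_measure_mul_two_pow_lt_measure
      (L := L) fund hsymm hconv hlt
  have hmem : (x : ι → ℝ) ∈ Submodule.span ℤ (Set.range b) := x.2
  rw [Module.Basis.mem_span_iff_repr_mem] at hmem
  choose z hz using hmem
  have hxz : (x : ι → ℝ) = fun j => (z j : ℝ) := by
    funext j
    have := hz j
    simpa [b] using this.symm
  refine ⟨z, ?_, ?_⟩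
  · rintro rfl
    apply hx0
    apply Subtype.ext
    rw [hxz]; funext j; simp
  · intro i
    rw [hxz] at hxs
    have := hxs i (Set.mem_univ i)
    simpa [abs_lt] using this

theorem core_transfer {ι : Type*} [Fintype ι] [DecidableEq ι] [Nonempty ι] (M : Matrix ι ι ℝ)
    (hM : M.det = 1) (τ : ι → ℝ) (hτ : ∑ i, τ i = 0) (v : ι → ℝ) (hv : v ≠ 0)
    (hint : ∀ x : ι → ℤ, ∃ k : ℤ, v ⬝ᵥ M.mulVec (fun j => (x j : ℝ)) = k)
    (lam R : ℝ) (hlam : ∀ i, |v i| ≤ lam * Real.exp (-τ i)) (hR : 0 < R)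
    (hRl : lam < R ^ (Fintype.card ι - 1)) :
    ∃ x : ι → ℤ, x ≠ 0 ∧
      ∀ i, |M.mulVec (fun j => (x j : ℝ)) i| ≤ (Fintype.card ι * R) * Real.exp (τ i) := by
  obtain ⟨i0, hi0⟩ := Finite.exists_max (fun i => |v i| * Real.exp (τ i))
  have hv0 : v i0 ≠ 0 := by
    intro h0
    apply hv
    funext i
    have h1 := hi0 i
    simp only [h0, abs_zero, zero_mul] at h1
    have h2 : |v i| ≤ 0 := by
      by_contra hc
      exact absurd h1 (not_le.2 (mul_pos (not_le.1 hc) (Real.exp_pos _)))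
    simpa using h2
  have hv0p : 0 < |v i0| := abs_pos.2 hv0
  let E := (Matrix.diagonal (fun i => Real.exp (-τ i))).updateRow i0 v
  have hE : E.det = v i0 * Real.exp (τ i0) := by
    have h1 : E.det = (∏ j ∈ Finset.univ.erase i0, Real.exp (-τ j)) * v i0 := by
      rw [← Matrix.cramer_transpose_apply, Matrix.cramer_eq_adjugate_mulVec,
        Matrix.diagonal_transpose, Matrix.adjugate_diagonal, Matrix.mulVec_diagonal]
    rw [h1, ← Real.exp_sum, mul_comm]
    congr 2
    rw [← Finset.add_sum_erase _ _ (Finset.mem_univ i0)] at hτ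
    rw [Finset.sum_neg_distrib]; linarith
  have hdet : (E * M).det = v i0 * Real.exp (τ i0) := by rw [Matrix.det_mul, hE, hM, mul_one]
  have habs : |(E * M).det| ≤ lam := by
    rw [hdet, abs_mul, Real.abs_exp]
    have := hlam i0
    calc |v i0| * Real.exp (τ i0) ≤ (lam * Real.exp (-τ i0)) * Real.exp (τ i0) := by gcongr
      _ = lam := by rw [mul_assoc, ← Real.exp_add]; simp
  let c : ι → ℝ := fun i => if i = i0 then 1 else R
  have hprod : ∏ i, c i = R ^ (Fintype.card ι - 1) := by
    rw [← Finset.mul_prod_erase _ _ (Finset.mem_univ i0)]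
    have : ∏ x ∈ Finset.univ.erase i0, c x = ∏ x ∈ Finset.univ.erase i0, R :=
      Finset.prod_congr rfl (fun x hx => by simp [c, Finset.ne_of_mem_erase hx])
    rw [this, Finset.prod_const, Finset.card_erase_of_mem (Finset.mem_univ _), Finset.card_univ]
    simp [c]
  obtain ⟨x, hx0, hx⟩ := minkowski_forms (E * M)
    (by rw [hdet]; exact mul_ne_zero hv0 (Real.exp_ne_zero _)) c
    (fun i => by simp only [c]; split_ifs <;> linarith) (by rw [hprod]; linarith)
  refine ⟨x, hx0, ?_⟩
  set z := M.mulVec (fun j => (x j : ℝ)) with hz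
  have hxE : ∀ i, |E.mulVec z i| < c i := by
    intro i; have := hx i; rwa [← Matrix.mulVec_mulVec] at this
  have hcard : (1 : ℝ) ≤ Fintype.card ι := by exact_mod_cast Fintype.card_pos
  have hne : ∀ i, i ≠ i0 → |z i| ≤ R * Real.exp (τ i) := by
    intro i hi
    have h1 := hxE i
    have h2 : E.mulVec z i = Real.exp (-τ i) * z i := by
      have : E.mulVec z i = (Matrix.diagonal (fun i => Real.exp (-τ i))).mulVec z i := by
        simp only [Matrix.mulVec, E]
        rw [Matrix.updateRow_ne hi]
      rw [this, Matrix.mulVec_diagonal]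
    rw [h2, abs_mul, Real.abs_exp] at h1
    simp only [c, if_neg hi] at h1
    calc |z i| = (Real.exp (-τ i) * |z i|) * Real.exp (τ i) := by
          rw [mul_right_comm, ← Real.exp_add]; simp
      _ ≤ R * Real.exp (τ i) := by gcongr
  have hzero : v ⬝ᵥ z = 0 := by
    have h1 := hxE i0
    have h2 : E.mulVec z i0 = v ⬝ᵥ z := by
      simp only [Matrix.mulVec, E]
      rw [Matrix.updateRow_self]
    rw [h2] at h1
    obtain ⟨k, hk⟩ := hint x
    rw [← hz] at hk
    rw [hk] at h1 ⊢
    simp only [c, if_true] at h1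
    have : |k| < 1 := by exact_mod_cast h1
    rw [Int.abs_lt_one_iff] at this
    simp [this]
  intro i
  by_cases hi : i = i0
  · subst hi
    have h1 : v i * z i = - ∑ j ∈ Finset.univ.erase i, v j * z j := by
      have : ∑ j, v j * z j = 0 := hzero
      rw [← Finset.add_sum_erase _ _ (Finset.mem_univ i)] at this
      linarith
    have h2 : |v i| * |z i| ≤ ∑ j ∈ Finset.univ.erase i, (|v i| * Real.exp (τ i)) * R := by
      rw [← abs_mul, h1, abs_neg]
      refine (Finset.abs_sum_le_sum_abs _ _).trans (Finset.sum_le_sum ?_)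
      intro j hj
      rw [abs_mul]
      calc |v j| * |z j| ≤ |v j| * (R * Real.exp (τ j)) := by
            gcongr; exact hne j (Finset.ne_of_mem_erase hj)
        _ = (|v j| * Real.exp (τ j)) * R := by ring
        _ ≤ _ := mul_le_mul_of_nonneg_right (hi0 j) hR.le
    have h3 : |v i| * |z i| ≤ |v i| * ((Fintype.card ι * R) * Real.exp (τ i)) := by
      refine (h2.trans (Finset.sum_le_univ_sum_of_nonneg (fun _ => by positivity))).trans ?_
      rw [Finset.sum_const, Finset.card_univ, nsmul_eq_mul]
      apply le_of_eq; ring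
    exact le_of_mul_le_mul_left h3 hv0p
  · refine (hne i hi).trans ?_
    have := Real.exp_pos (τ i)
    gcongr
    nlinarith

theorem succMin_one (d : ℕ) (Λ : Set (Fin d → ℝ)) (τ : Fin d → ℝ) :
    succMin d Λ τ 1 = sInf {lam : ℝ | 0 < lam ∧ ∃ u ∈ Λ, u ≠ 0 ∧
      ∀ i, |u i| ≤ lam * Real.exp (τ i)} := by
  unfold succMin
  congr 1
  ext lam
  simp only [Set.mem_setOf_eq]
  refine and_congr_right (fun _ => ?_)
  constructor
  · rintro ⟨v, h1, h2, h3⟩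
    exact ⟨v 0, h1 0, h2.ne_zero 0, h3 0⟩
  · rintro ⟨u, h1, h2, h3⟩
    exact ⟨fun _ => u, fun _ => h1, linearIndependent_unique_iff.2 h2, fun _ => h3⟩

theorem succMin_bounds (d : ℕ) (Λ : Set (Fin d → ℝ)) (τ : Fin d → ℝ) (K : ℝ)
    (h1 : ∀ v ∈ Λ, v ≠ 0 → ∃ i, 1 ≤ |v i|) (h2 : ∃ v ∈ Λ, v ≠ 0 ∧ ∀ i, |v i| ≤ 1)
    (hK : ∀ i, |τ i| ≤ K) :
    Real.exp (-K) ≤ succMin d Λ τ 1 ∧ succMin d Λ τ 1 ≤ Real.exp K := by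
  rw [succMin_one]
  obtain ⟨v, hv, hv0, hv1⟩ := h2
  have hmem : Real.exp K ∈ {lam : ℝ | 0 < lam ∧ ∃ u ∈ Λ, u ≠ 0 ∧
      ∀ i, |u i| ≤ lam * Real.exp (τ i)} := by
    refine ⟨Real.exp_pos _, v, hv, hv0, fun i => (hv1 i).trans ?_⟩
    rw [← Real.exp_add]
    apply Real.one_le_exp
    linarith [neg_abs_le (τ i), hK i]
  constructor
  · refine le_csInf ⟨_, hmem⟩ ?_
    rintro lam ⟨hl, u, hu, hu0, hul⟩
    obtain ⟨i, hi⟩ := h1 u hu hu0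
    have h3 : 1 ≤ lam * Real.exp (τ i) := hi.trans (hul i)
    have h4 : Real.exp (τ i) ≤ Real.exp K := Real.exp_le_exp.2 ((le_abs_self _).trans (hK i))
    have h5 : 1 ≤ lam * Real.exp K := h3.trans (by gcongr)
    rw [Real.exp_neg, inv_le_iff_one_le_mul₀ (Real.exp_pos _)]
    exact h5
  · exact csInf_le ⟨0, fun x hx => hx.1.le⟩ hmem

theorem log_transfer (d : ℕ) (hd : 2 ≤ d) (Λ Λ' : Set (Fin d → ℝ)) (τ : Fin d → ℝ) (K : ℝ)
    (h1 : ∀ v ∈ Λ, v ≠ 0 → ∃ i, 1 ≤ |v i|) (h2 : ∃ v ∈ Λ, v ≠ 0 ∧ ∀ i, |v i| ≤ 1)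
    (h1' : ∀ v ∈ Λ', v ≠ 0 → ∃ i, 1 ≤ |v i|) (h2' : ∃ v ∈ Λ', v ≠ 0 ∧ ∀ i, |v i| ≤ 1)
    (hK : ∀ i, |τ i| ≤ K)
    (htr : ∀ (lam : ℝ), ∀ u ∈ Λ', u ≠ 0 → (∀ i, |u i| ≤ lam * Real.exp (-τ i)) →
      ∀ R : ℝ, 0 < R → lam < R ^ (d - 1) →
        ∃ w ∈ Λ, w ≠ 0 ∧ ∀ i, |w i| ≤ (d * R) * Real.exp (τ i)) :
    ((d : ℝ) - 1) * (Lk d Λ τ 1 - Real.log (2 * d)) ≤ Lk d Λ' (-τ) 1 := by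
  have hb := succMin_bounds d Λ τ K h1 h2 hK
  have hb' := succMin_bounds d Λ' (-τ) K h1' h2' (fun i => by simpa using hK i)
  have hp : 0 < succMin d Λ τ 1 := (Real.exp_pos _).trans_le hb.1
  have hd0 : (0 : ℝ) < d := by exact_mod_cast (by omega : 0 < d)
  have key : (succMin d Λ τ 1 / (2 * d)) ^ (d - 1) ≤ succMin d Λ' (-τ) 1 := by
    rw [succMin_one d Λ']
    apply le_csInf
    · obtain ⟨v, hv, hv0, hv1⟩ := h2'
      refine ⟨Real.exp K, Real.exp_pos _, v, hv, hv0, fun i => (hv1 i).trans ?_⟩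
      rw [← Real.exp_add]
      apply Real.one_le_exp
      simp only [Pi.neg_apply]
      linarith [le_abs_self (τ i), hK i]
    · rintro lam ⟨hl, u, hu, hu0, hul⟩
      by_contra hcon
      push Not at hcon
      obtain ⟨w, hw, hw0, hwR⟩ := htr lam u hu hu0 hul _ (by positivity) hcon
      have hle : succMin d Λ τ 1 ≤ d * (succMin d Λ τ 1 / (2 * d)) := by
        conv_lhs => rw [succMin_one]
        exact csInf_le ⟨0, fun x hx => hx.1.le⟩ ⟨by positivity, w, hw, hw0, hwR⟩
      have he : d * (succMin d Λ τ 1 / (2 * d)) = succMin d Λ τ 1 / 2 := by field_simp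
      linarith
  have hlog := Real.log_le_log (by positivity) key
  rw [Real.log_pow, Real.log_div hp.ne' (by positivity), Nat.cast_sub (by omega)] at hlog
  simpa [Lk] using hlog

theorem Sk_one (d : ℕ) (Λ : Set (Fin d → ℝ)) (τ : Fin d → ℝ) : Sk d Λ τ 1 = Lk d Λ τ 1 := by
  simp [Sk]

theorem Lk_abs_le (d : ℕ) (Λ : Set (Fin d → ℝ)) (μ : Fin d → ℝ)
    (h1 : ∀ v ∈ Λ, v ≠ 0 → ∃ i, 1 ≤ |v i|) (h2 : ∃ v ∈ Λ, v ≠ 0 ∧ ∀ i, |v i| ≤ 1)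
    (s : ℝ) (hs : 0 < s) : |Lk d Λ (s • μ) 1 / s| ≤ ‖μ‖ := by
  have hb := succMin_bounds d Λ (s • μ) (s * ‖μ‖) h1 h2 (fun i => by
    simp only [Pi.smul_apply, smul_eq_mul, abs_mul, abs_of_pos hs]
    gcongr
    exact norm_le_pi_norm μ i)
  have hp : 0 < succMin d Λ (s • μ) 1 := (Real.exp_pos _).trans_le hb.1
  have l1 := (Real.le_log_iff_exp_le hp).2 hb.1
  have l2 := (Real.log_le_iff_le_exp hp).2 hb.2
  rw [abs_div, abs_of_pos hs, div_le_iff₀ hs, abs_le, Lk]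
  constructor <;> linarith

theorem PsiLow_le (d : ℕ) (hd : 2 ≤ d) (Λ Λ' : Set (Fin d → ℝ)) (μ : Fin d → ℝ)
    (h1 : ∀ v ∈ Λ, v ≠ 0 → ∃ i, 1 ≤ |v i|) (h2 : ∃ v ∈ Λ, v ≠ 0 ∧ ∀ i, |v i| ≤ 1)
    (h1' : ∀ v ∈ Λ', v ≠ 0 → ∃ i, 1 ≤ |v i|) (h2' : ∃ v ∈ Λ', v ≠ 0 ∧ ∀ i, |v i| ≤ 1)
    (hsum : ∑ i, μ i = 0)
    (htr : ∀ τ : Fin d → ℝ, ∑ i, τ i = 0 →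
      ∀ (lam : ℝ), ∀ u ∈ Λ', u ≠ 0 → (∀ i, |u i| ≤ lam * Real.exp (-τ i)) →
      ∀ R : ℝ, 0 < R → lam < R ^ (d - 1) →
        ∃ w ∈ Λ, w ≠ 0 ∧ ∀ i, |w i| ≤ (d * R) * Real.exp (τ i)) :
    PsiLow d Λ μ 1 ≤ PsiLow d Λ' (-μ) 1 / ((d : ℝ) - 1) := by
  have hd1 : (0 : ℝ) < (d : ℝ) - 1 := by
    have : (2 : ℝ) ≤ d := by exact_mod_cast hd
    linarith
  simp only [PsiLow, Sk_one]
  have hbd : IsBoundedUnder (· ≥ ·) atTop (fun s : ℝ => Lk d Λ (s • μ) 1 / s) := by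
    refine ⟨-‖μ‖, ?_⟩
    rw [eventually_map]
    filter_upwards [eventually_gt_atTop 0] with s hs
    exact (abs_le.1 (Lk_abs_le d Λ μ h1 h2 s hs)).1
  have hcb : IsCoboundedUnder (· ≥ ·) atTop (fun s : ℝ => Lk d Λ' (s • -μ) 1 / s) := by
    apply IsBoundedUnder.isCoboundedUnder_ge
    refine ⟨‖-μ‖, ?_⟩
    rw [eventually_map]
    filter_upwards [eventually_gt_atTop 0] with s hs
    exact (abs_le.1 (Lk_abs_le d Λ' (-μ) h1' h2' s hs)).2
  rw [le_div_iff₀ hd1]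
  apply le_of_forall_pos_le_add
  intro ε hε
  have hlt : liminf (fun s : ℝ => Lk d Λ (s • μ) 1 / s) atTop - ε / (2 * ((d : ℝ) - 1))
      < liminf (fun s : ℝ => Lk d Λ (s • μ) 1 / s) atTop := by
    have : 0 < ε / (2 * ((d : ℝ) - 1)) := by positivity
    linarith
  have hev := eventually_lt_of_lt_liminf hlt hbd
  have hC : ∀ᶠ s : ℝ in atTop, ((d : ℝ) - 1) * Real.log (2 * d) / s < ε / 2 :=
    (tendsto_const_nhds.div_atTop tendsto_id).eventually (gt_mem_nhds (by positivity))
  rw [← sub_le_iff_le_add]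
  apply le_liminf_of_le hcb
  filter_upwards [hev, hC, eventually_gt_atTop 0] with s e1 e2 hs
  have hsum' : ∑ i, (s • μ) i = 0 := by
    simp [← Finset.mul_sum, hsum]
  have hlt := log_transfer d hd Λ Λ' (s • μ) (s * ‖μ‖) h1 h2 h1' h2' (fun i => by
    simp only [Pi.smul_apply, smul_eq_mul, abs_mul, abs_of_pos hs]
    gcongr
    exact norm_le_pi_norm μ i) (htr _ hsum')
  have h5 := div_le_div_of_nonneg_right hlt hs.le
  rw [smul_neg]
  have h6 : ((d : ℝ) - 1) * (Lk d Λ (s • μ) 1 - Real.log (2 * d)) / s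
      = ((d : ℝ) - 1) * (Lk d Λ (s • μ) 1 / s) - ((d : ℝ) - 1) * Real.log (2 * d) / s := by
    ring
  have h7 := mul_lt_mul_of_pos_left e1 hd1
  have h8 : ((d : ℝ) - 1) * (ε / (2 * ((d : ℝ) - 1))) = ε / 2 := by field_simp
  rw [mul_sub, h8] at h7
  linarith

theorem sum_muGamma {m n : ℕ} (σ : Fin m → ℝ) (ρ : Fin n → ℝ)
    (hσs : ∑ j, σ j = 1) (hρs : ∑ i, ρ i = 1) (γ : ℝ) :
    ∑ i, muGamma m n σ ρ γ i = 0 := by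
  have hr : ∑ i : Fin n, ρ i.rev = 1 := by
    rw [← hρs]; exact Equiv.sum_comp Fin.revPerm ρ
  have h1 : ∑ i, eOne m n σ i = 0 := by
    simp [eOne, Fin.sum_univ_add, ← Finset.mul_sum, hσs]
  have h2 : ∑ i, eTwo m n ρ i = 0 := by
    simp [eTwo, Fin.sum_univ_add, ← Finset.mul_sum, hr]
  simp [muGamma, Finset.sum_add_distrib, ← Finset.mul_sum, h1, h2]

theorem one_le_abs_intCast {k : ℤ} (hk : k ≠ 0) : (1 : ℝ) ≤ |(k : ℝ)| := by
  exact_mod_cast Int.one_le_abs hk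

theorem latt_far {m n : ℕ} (Θ : Matrix (Fin n) (Fin m) ℝ) :
    ∀ v ∈ latt m n Θ, v ≠ 0 → ∃ i, 1 ≤ |v i| := by
  rintro v ⟨x, y, rfl⟩ hv
  by_cases hx : x = 0
  · by_cases hy : y = 0
    · exfalso; apply hv
      subst hx hy
      funext i
      refine Fin.addCases (fun j => ?_) (fun j => ?_) i <;> simp [Matrix.mulVec, dotProduct]
    · obtain ⟨j, hj⟩ := Function.ne_iff.1 hy
      refine ⟨Fin.natAdd m j, ?_⟩
      subst hx
      simpa [Matrix.mulVec, dotProduct] using one_le_abs_intCast hj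
  · obtain ⟨j, hj⟩ := Function.ne_iff.1 hx
    refine ⟨Fin.castAdd n j, ?_⟩
    simpa using one_le_abs_intCast hj

theorem lattDual_far {m n : ℕ} (Θ : Matrix (Fin n) (Fin m) ℝ) :
    ∀ v ∈ lattDual m n Θ, v ≠ 0 → ∃ i, 1 ≤ |v i| := by
  rintro v ⟨x, y, rfl⟩ hv
  by_cases hy : y = 0
  · by_cases hx : x = 0
    · exfalso; apply hv
      subst hx hy
      funext i
      refine Fin.addCases (fun j => ?_) (fun j => ?_) i <;> simp [Matrix.mulVec, dotProduct]
    · obtain ⟨j, hj⟩ := Function.ne_iff.1 hx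
      refine ⟨Fin.castAdd n j, ?_⟩
      subst hy
      simpa [Matrix.mulVec, dotProduct] using one_le_abs_intCast hj
  · obtain ⟨j, hj⟩ := Function.ne_iff.1 hy
    refine ⟨Fin.natAdd m j, ?_⟩
    simpa using one_le_abs_intCast hj

theorem latt_near {m n : ℕ} (Θ : Matrix (Fin (n + 1)) (Fin m) ℝ) :
    ∃ v ∈ latt m (n + 1) Θ, v ≠ 0 ∧ ∀ i, |v i| ≤ 1 := by
  refine ⟨_, ⟨0, fun _ => 1, rfl⟩, ?_, ?_⟩
  · intro h
    have := congrFun h (Fin.natAdd m 0)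
    simp [Matrix.mulVec, dotProduct] at this
  · intro i
    refine Fin.addCases (fun j => ?_) (fun j => ?_) i <;> simp [Matrix.mulVec, dotProduct]

theorem lattDual_near {m n : ℕ} (Θ : Matrix (Fin n) (Fin (m + 1)) ℝ) :
    ∃ v ∈ lattDual (m + 1) n Θ, v ≠ 0 ∧ ∀ i, |v i| ≤ 1 := by
  refine ⟨_, ⟨fun _ => 1, 0, rfl⟩, ?_, ?_⟩
  · intro h
    have := congrFun h (Fin.castAdd n 0)
    simp [Matrix.mulVec, dotProduct] at this
  · intro i
    refine Fin.addCases (fun j => ?_) (fun j => ?_) i <;> simp [Matrix.mulVec, dotProduct]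

theorem latt_transfer {m n : ℕ} (Θ : Matrix (Fin (n + 1)) (Fin (m + 1)) ℝ)
    (τ : Fin (m + 1 + (n + 1)) → ℝ) (hτ : ∑ i, τ i = 0) (lam : ℝ)
    (u : Fin (m + 1 + (n + 1)) → ℝ) (hu : u ∈ lattDual (m + 1) (n + 1) Θ) (hu0 : u ≠ 0)
    (hul : ∀ i, |u i| ≤ lam * Real.exp (-τ i)) (R : ℝ) (hR : 0 < R)
    (hlR : lam < R ^ (m + 1 + (n + 1) - 1)) :
    ∃ w ∈ latt (m + 1) (n + 1) Θ, w ≠ 0 ∧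
      ∀ i, |w i| ≤ ((m + 1 + (n + 1) : ℕ) * R) * Real.exp (τ i) := by
  let e : Fin (m + 1) ⊕ Fin (n + 1) ≃ Fin (m + 1 + (n + 1)) := finSumFinEquiv
  let M : Matrix (Fin (m + 1) ⊕ Fin (n + 1)) (Fin (m + 1) ⊕ Fin (n + 1)) ℝ :=
    Matrix.fromBlocks 1 0 (-Θ) 1
  have hM : M.det = 1 := by simp [M, Matrix.det_fromBlocks_zero₁₂]
  have hMx : ∀ x : Fin (m + 1) ⊕ Fin (n + 1) → ℤ, M.mulVec (fun j => (x j : ℝ)) =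
      Sum.elim (fun j => (x (Sum.inl j) : ℝ)) (fun i => (x (Sum.inr i) : ℝ) -
        Θ.mulVec (fun j => (x (Sum.inl j) : ℝ)) i) := by
    intro x
    simp only [M]
    rw [Matrix.fromBlocks_mulVec]
    funext i
    rcases i with j | j
    · simp [Function.comp_def]
    · simp [Function.comp_def, Matrix.neg_mulVec]; ring
  obtain ⟨p, q, hpq⟩ := hu
  have hcard : Fintype.card (Fin (m + 1) ⊕ Fin (n + 1)) = m + 1 + (n + 1) := by simp
  obtain ⟨x, hx0, hx⟩ := core_transfer M hM (τ ∘ e) (by rw [← hτ]; exact Equiv.sum_comp e τ)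
    (u ∘ e) (by
      intro h; apply hu0; funext i
      have := congrFun h (e.symm i)
      simpa using this) (by
      intro x
      refine ⟨p ⬝ᵥ (fun j => x (Sum.inl j)) + q ⬝ᵥ (fun j => x (Sum.inr j)), ?_⟩
      rw [hMx]
      have hue : u ∘ e = Sum.elim
          ((fun j => (p j : ℝ)) + Θ.transpose.mulVec (fun i => (q i : ℝ)))
          (fun i => (q i : ℝ)) := by
        funext i
        rcases i with j | j
        · simp [e, hpq]
        · simp [e, hpq]
      have hsub : (fun i => (x (Sum.inr i) : ℝ) - Θ.mulVec (fun j => (x (Sum.inl j) : ℝ)) i)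
          = (fun i => (x (Sum.inr i) : ℝ)) - Θ.mulVec (fun j => (x (Sum.inl j) : ℝ)) := rfl
      rw [hue, hsub, sumElim_dotProduct_sumElim, add_dotProduct, dotProduct_sub,
        Matrix.mulVec_transpose, Matrix.dotProduct_mulVec]
      simp only [dotProduct]
      push_cast
      ring) lam R (fun i => hul (e i)) hR (by rw [hcard]; exact hlR)
  refine ⟨_, ⟨fun j => x (Sum.inl j), fun j => x (Sum.inr j), rfl⟩, ?_, ?_⟩
  · intro h
    apply hx0
    have hl : ∀ j, x (Sum.inl j) = 0 := by
      intro j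
      have := congrFun h (Fin.castAdd _ j)
      simpa using this
    funext i
    rcases i with j | j
    · exact hl j
    · have := congrFun h (Fin.natAdd _ j)
      simpa [hl, Matrix.mulVec, dotProduct] using this
  · intro i
    rw [hMx, hcard] at hx
    refine Fin.addCases (fun j => ?_) (fun j => ?_) i
    · simpa [e] using hx (Sum.inl j)
    · simpa [e] using hx (Sum.inr j)

theorem stmt11 {m n : ℕ} (Θ : Matrix (Fin (n + 1)) (Fin (m + 1)) ℝ)
    (σ : Fin (m + 1) → ℝ) (ρ : Fin (n + 1) → ℝ)
    (hσa : Antitone σ) (hρa : Antitone ρ)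
    (hσp : ∀ j, 0 < σ j) (hρp : ∀ i, 0 < ρ i)
    (hσs : ∑ j, σ j = 1) (hρs : ∑ i, ρ i = 1)
    (γ : ℝ) :
    PsiLow (m + 1 + (n + 1)) (latt (m + 1) (n + 1) Θ) (muGamma (m + 1) (n + 1) σ ρ γ) 1 ≤
      PsiLow (m + 1 + (n + 1)) (lattDual (m + 1) (n + 1) Θ)
        (-muGamma (m + 1) (n + 1) σ ρ γ) 1 / ((m + 1 + (n + 1) : ℕ) - 1 : ℝ) := by
  have hsum := sum_muGamma σ ρ hσs hρs γ
  refine PsiLow_le _ (by omega) _ _ _ (latt_far Θ) (latt_near Θ) (lattDual_far Θ)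
    (lattDual_near Θ) hsum ?_
  intro τ hτ lam u hu hu0 hul R hR hlR
  exact latt_transfer Θ τ hτ lam u hu hu0 hul R hR hlR
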